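/- arXiv:1804.08174 — 5 statements merged into one kernel-verified Lean document; each statement's English description precedes it below -/
import Mathlib

section
/- Let M be an n×n row-stochastic matrix satisfying M_{ij} > 0 ⟺ M_{ji} > 0 for all i, j, and let p be a probability distribution on {1,…,n} with p_i > 0 for all i; write p' = pM. Then the Gibbs entropy change decomposes as S(p') − S(p) = Σ_{(i,j): M_{ij}>0} p_i M_{ij} log( p_i M_{ij} / (p'_j M_{ji}) ) + Σ_{(i,j): M_{ij}>0} p_i M_{ij} log( M_{ji} / M_{ij} ), and the first sum on the right-hand side is non-negative. -/
open Finset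

/-!
Every sum over the allowed transitions is weighted by the joint law `p i * M i j` of the states
before and after the step. Its marginals are `p` and `p' = p ᵥ* M`, so the entropy change is the
average of `log (p i) - log (p' j)`, and inserting the factor `M i j / N j i`, for a reverse
kernel `N`, splits the logarithm into production and flow. The production is the relative entropy
of the joint law with respect to the reversed one `p' j * N j i`; both have total mass `∑ j, p' j`,
so it is non-negative by Gibbs' inequality.
-/

lemma log_sub_log_eq_log_div_add_log_div {a b m n : ℝ} (ha : a ≠ 0) (hb : b ≠ 0) (hm : m ≠ 0)
    (hn : n ≠ 0) :
    Real.log a - Real.log b = Real.log (a * m / (b * n)) + Real.log (n / m) := by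
  rw [← Real.log_div ha hb, ← Real.log_mul (by positivity) (by positivity)]
  congr 1
  field_simp

lemma sub_le_mul_log_div {a b : ℝ} (ha : 0 ≤ a) (hb : 0 ≤ b) (hab : b = 0 → a = 0) :
    a - b ≤ a * Real.log (a / b) := by
  rcases hb.eq_or_lt with rfl | hb
  · simp [hab rfl]
  · have kl_eq : b * InformationTheory.klFun (a / b) = a * Real.log (a / b) + b - a := by
      rw [InformationTheory.klFun_apply]
      field_simp
    have kl_nonneg := mul_nonneg hb.le (InformationTheory.klFun_nonneg (div_nonneg ha hb.le))
    linarith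

section EntropyChange

open scoped Matrix

variable {ι κ : Type*} [Fintype ι] {p : ι → ℝ} {M : Matrix ι κ ℝ} {N : Matrix κ ι ℝ}

lemma vecMul_nonneg (hp : ∀ i, 0 ≤ p i) (hM : ∀ i j, 0 ≤ M i j) (j : κ) : 0 ≤ (p ᵥ* M) j :=
  sum_nonneg fun i _ => mul_nonneg (hp i) (hM i j)

lemma vecMul_pos (hp : ∀ i, 0 ≤ p i) (hM : ∀ i j, 0 ≤ M i j) {i : ι} {j : κ}
    (hpi : 0 < p i) (hMij : 0 < M i j) : 0 < (p ᵥ* M) j :=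
  sum_pos' (fun k _ => mul_nonneg (hp k) (hM k j)) ⟨i, mem_univ i, mul_pos hpi hMij⟩

/-- The Gibbs (Shannon) entropy of a vector of weights. The convention `0 * log 0 = 0` holds
because `Real.log 0` is a real number. -/
noncomputable def gibbsEntropy (p : ι → ℝ) : ℝ :=
  -∑ i, p i * Real.log (p i)

variable [Fintype κ]

/-- The sum of a transition observable `f` over the allowed transitions `0 < M i j`, weighted by the
joint law `p i * M i j`; for a probability vector `p` and a stochastic `M` it is the mean of `f`
over one step of the chain. A state with `p i = 0` contributes nothing, even if `f i j` is a
logarithm of zero. -/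
noncomputable def transitionSum (p : ι → ℝ) (M : Matrix ι κ ℝ) (f : ι → κ → ℝ) : ℝ :=
  ∑ i, ∑ j, if 0 < M i j then p i * M i j * f i j else 0

/-- The entropy produced by a step of `M` started from `p`, relative to the reverse kernel `N`:
the relative entropy of the forward joint law with respect to the reversed one. -/
noncomputable def entropyProduction (p : ι → ℝ) (M : Matrix ι κ ℝ) (N : Matrix κ ι ℝ) : ℝ :=
  transitionSum p M fun i j => Real.log (p i * M i j / ((p ᵥ* M) j * N j i))

/-- The entropy exchanged with the environment (heat) in a step of `M` started from `p`, relative to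
the reverse kernel `N`. -/
noncomputable def entropyFlow (p : ι → ℝ) (M : Matrix ι κ ℝ) (N : Matrix κ ι ℝ) : ℝ :=
  transitionSum p M fun i j => Real.log (N j i / M i j)

lemma sum_vecMul_of_row_sum_eq_one (hM1 : ∀ i, ∑ j, M i j = 1) :
    ∑ j, (p ᵥ* M) j = ∑ i, p i := by
  simp only [Matrix.vecMul, dotProduct]
  rw [sum_comm]
  simp only [← mul_sum, hM1, mul_one]

lemma transitionSum_eq_sum (hM : ∀ i j, 0 ≤ M i j) (f : ι → κ → ℝ) :
    transitionSum p M f = ∑ i, ∑ j, p i * M i j * f i j := by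
  refine sum_congr rfl fun i _ => sum_congr rfl fun j _ => ?_
  rcases (hM i j).eq_or_lt with hMij | hMij
  · simp [← hMij]
  · exact if_pos hMij

lemma transitionSum_congr (hp : ∀ i, 0 ≤ p i) {f g : ι → κ → ℝ}
    (hfg : ∀ i j, 0 < p i → 0 < M i j → f i j = g i j) :
    transitionSum p M f = transitionSum p M g := by
  refine sum_congr rfl fun i _ => sum_congr rfl fun j _ => if_ctx_congr Iff.rfl (fun hMij => ?_)
    fun _ => rfl
  rcases (hp i).eq_or_lt with hpi | hpi
  · simp [← hpi]
  · rw [hfg i j hpi hMij]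

lemma transitionSum_add (hM : ∀ i j, 0 ≤ M i j) (f g : ι → κ → ℝ) :
    transitionSum p M (fun i j => f i j + g i j) = transitionSum p M f + transitionSum p M g := by
  simp only [transitionSum_eq_sum hM, mul_add, sum_add_distrib]

lemma transitionSum_sub (hM : ∀ i j, 0 ≤ M i j) (f g : ι → κ → ℝ) :
    transitionSum p M (fun i j => f i j - g i j) = transitionSum p M f - transitionSum p M g := by
  simp only [transitionSum_eq_sum hM, mul_sub, sum_sub_distrib]

lemma transitionSum_source (hM : ∀ i j, 0 ≤ M i j) (hM1 : ∀ i, ∑ j, M i j = 1) (f : ι → ℝ) :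
    transitionSum p M (fun i _ => f i) = ∑ i, p i * f i := by
  simp only [transitionSum_eq_sum hM, ← sum_mul, ← mul_sum, hM1, mul_one]

lemma transitionSum_target (hM : ∀ i j, 0 ≤ M i j) (g : κ → ℝ) :
    transitionSum p M (fun _ j => g j) = ∑ j, (p ᵥ* M) j * g j := by
  rw [transitionSum_eq_sum hM, sum_comm]
  simp only [← sum_mul, Matrix.vecMul, dotProduct]

lemma gibbsEntropy_vecMul_sub_gibbsEntropy (hM : ∀ i j, 0 ≤ M i j) (hM1 : ∀ i, ∑ j, M i j = 1) :
    gibbsEntropy (p ᵥ* M) - gibbsEntropy p =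
      transitionSum p M fun i j => Real.log (p i) - Real.log ((p ᵥ* M) j) := by
  rw [transitionSum_sub hM, transitionSum_source hM hM1,
    transitionSum_target hM fun j => Real.log ((p ᵥ* M) j), gibbsEntropy, gibbsEntropy,
    neg_sub_neg]

theorem gibbsEntropy_sub_eq_entropyProduction_add_entropyFlow (hp : ∀ i, 0 ≤ p i)
    (hM : ∀ i j, 0 ≤ M i j) (hM1 : ∀ i, ∑ j, M i j = 1) (hMN : ∀ i j, 0 < M i j → 0 < N j i) :
    gibbsEntropy (p ᵥ* M) - gibbsEntropy p = entropyProduction p M N + entropyFlow p M N := by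
  rw [gibbsEntropy_vecMul_sub_gibbsEntropy hM hM1, entropyProduction, entropyFlow,
    ← transitionSum_add hM]
  exact transitionSum_congr hp fun i j hpi hMij => log_sub_log_eq_log_div_add_log_div
    hpi.ne' (vecMul_pos hp hM hpi hMij).ne' hMij.ne' (hMN i j hMij).ne'

theorem entropyProduction_nonneg (hp : ∀ i, 0 ≤ p i) (hM : ∀ i j, 0 ≤ M i j)
    (hN : ∀ j i, 0 ≤ N j i) (hN1 : ∀ j, ∑ i, N j i = 1)
    (hMN : ∀ i j, 0 < M i j → 0 < N j i) : 0 ≤ entropyProduction p M N := by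
  have reverse_eq_zero (i : ι) (j : κ) (h : (p ᵥ* M) j * N j i = 0) : p i * M i j = 0 := by
    by_contra hne
    have hpi : 0 < p i := (hp i).lt_of_ne' (left_ne_zero_of_mul hne)
    have hMij : 0 < M i j := (hM i j).lt_of_ne' (right_ne_zero_of_mul hne)
    exact (mul_pos (vecMul_pos hp hM hpi hMij) (hMN i j hMij)).ne' h
  have forward_mass : ∑ i, ∑ j, p i * M i j = ∑ j, (p ᵥ* M) j := sum_comm
  have reverse_mass : ∑ i, ∑ j, (p ᵥ* M) j * N j i = ∑ j, (p ᵥ* M) j :=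
    sum_vecMul_of_row_sum_eq_one hN1
  calc (0 : ℝ) = ∑ i, ∑ j, (p i * M i j - (p ᵥ* M) j * N j i) := by
        simp only [sum_sub_distrib, forward_mass, reverse_mass, sub_self]
    _ ≤ ∑ i, ∑ j, p i * M i j * Real.log (p i * M i j / ((p ᵥ* M) j * N j i)) :=
        sum_le_sum fun i _ => sum_le_sum fun j _ => sub_le_mul_log_div
          (mul_nonneg (hp i) (hM i j)) (mul_nonneg (vecMul_nonneg hp hM j) (hN j i))
          (reverse_eq_zero i j)
    _ = entropyProduction p M N := (transitionSum_eq_sum hM _).symm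

theorem entropy_change_decomposition_general (hp : ∀ i, 0 ≤ p i)
    (hM : ∀ i j, 0 ≤ M i j) (hM1 : ∀ i, ∑ j, M i j = 1)
    (hN : ∀ j i, 0 ≤ N j i) (hN1 : ∀ j, ∑ i, N j i = 1)
    (hMN : ∀ i j, 0 < M i j → 0 < N j i) :
    gibbsEntropy (p ᵥ* M) - gibbsEntropy p = entropyProduction p M N + entropyFlow p M N ∧
      0 ≤ entropyProduction p M N :=
  ⟨gibbsEntropy_sub_eq_entropyProduction_add_entropyFlow hp hM hM1 hMN,
    entropyProduction_nonneg hp hM hN hN1 hMN⟩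

end EntropyChange

/-- Decomposition of the Gibbs entropy change in one step of a Markov chain into a
non-negative entropy production term plus a heat exchange term. -/
theorem entropy_change_decomposition (n : ℕ) (M : Matrix (Fin n) (Fin n) ℝ)
    (hM0 : ∀ i j, 0 ≤ M i j) (hM1 : ∀ i, ∑ j, M i j = 1)
    (hsym : ∀ i j, 0 < M i j ↔ 0 < M j i)
    (p : Fin n → ℝ) (hppos : ∀ i, 0 < p i) (hp1 : ∑ i, p i = 1)
    (p' : Fin n → ℝ) (hp' : ∀ j, p' j = ∑ i, p i * M i j) :
    ((-∑ j, p' j * Real.log (p' j)) - (-∑ i, p i * Real.log (p i))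
      = (∑ i, ∑ j, if 0 < M i j
            then p i * M i j * Real.log (p i * M i j / (p' j * M j i)) else 0)
        + (∑ i, ∑ j, if 0 < M i j
            then p i * M i j * Real.log (M j i / M i j) else 0))
    ∧ 0 ≤ ∑ i, ∑ j, if 0 < M i j
            then p i * M i j * Real.log (p i * M i j / (p' j * M j i)) else 0 := by
  obtain rfl : p' = Matrix.vecMul p M := funext hp'
  exact entropy_change_decomposition_general (fun i => (hppos i).le) hM0 hM1 hM0 hM1
    fun i j => (hsym i j).1
end

section
/- Let M be an irreducible and aperiodic n×n row-stochastic matrix with stationary distribution π, satisfying M_{ij} > 0 ⟺ M_{ji} > 0 for all i, j, and let p(0) be an initial probability distribution with p_i(0) > 0 for all i. Define for t ≥ 1 the relative entropy of the path measure with respect to its time-reversal, H(t) = Σ_{i_0,…,i_t : p_{i_0}(0) M_{i_0 i_1}⋯M_{i_{t−1} i_t} > 0} p_{i_0}(0) M_{i_0 i_1}⋯M_{i_{t−1} i_t} · log( p_{i_0}(0) M_{i_0 i_1}⋯M_{i_{t−1} i_t} / ( p_{i_t}(0) M_{i_t i_{t−1}}⋯M_{i_1 i_0} ) ). Then H(t)/t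 converges as t → ∞ to the stationary entropy production rate e_p = Σ_{(i,j): M_{ij}>0} π_i M_{ij} log( M_{ij} / M_{ji} ). -/
open Finset

/-!
On a path of positive weight the logarithm splits as
`log p(ω₀) - log p(ω_t) + ∑ₛ log (M(ωₛ, ωₛ₊₁) / M(ωₛ₊₁, ωₛ))`. Taking expectations, the entropy
`H(t)` is `p ⬝ᵥ ∑_{s < t} M ^ s h`, where `h i = ∑ j, M i j log (M i j / M j i)`, up to the boundary
term `p ⬝ᵥ log p - p ⬝ᵥ M ^ t (log p)`, which stays bounded. After division by `t` only the Cesàro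
mean of `M ^ s h` survives, and by the mean ergodic theorem it converges to the constant `π ⬝ᵥ h`:
the fixed points of `M` are the constants, and `M - 1` maps onto the kernel of `π ⬝ᵥ ·` because it
is injective there.
-/

open Matrix Filter Topology

section PathSums

variable {ι R : Type*} [CommSemiring R] {t : ℕ}

/-- The weight `p(ω₀) M(ω₀, ω₁) ⋯ M(ω_{t-1}, ω_t)` of the path `ω`, that is, its probability under
the Markov chain with initial distribution `p` and transition matrix `M`. The index `t` counts
steps, so `ω` visits `t + 1` states. -/
def pathWeight (p : ι → R) (M : Matrix ι ι R) (ω : Fin (t + 1) → ι) : R :=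
  p (ω 0) * ∏ s : Fin t, M (ω s.castSucc) (ω s.succ)

lemma pathWeight_comp_rev (p : ι → R) (M : Matrix ι ι R) (ω : Fin (t + 1) → ι) :
    pathWeight p M (ω ∘ Fin.rev) =
      p (ω (Fin.last t)) * ∏ s : Fin t, M (ω s.succ) (ω s.castSucc) := by
  simp only [pathWeight, Function.comp_apply, Fin.rev_zero, Fin.rev_castSucc, Fin.rev_succ]
  congr 1
  exact Equiv.prod_comp Fin.revPerm fun s : Fin t => M (ω s.succ) (ω s.castSucc)

lemma pathWeight_snoc (p : ι → R) (M : Matrix ι ι R) (ω : Fin (t + 1) → ι) (j : ι) :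
    pathWeight p M (Fin.snoc ω j : Fin (t + 2) → ι) = pathWeight p M ω * M (ω (Fin.last t)) j := by
  simp only [pathWeight, Fin.prod_univ_castSucc, Fin.succ_last, Fin.succ_castSucc, Fin.snoc_last,
    Fin.snoc_castSucc, mul_assoc, ← Fin.castSucc_zero]

variable [Fintype ι]

lemma sum_path_eq_sum_snoc {A : Type*} [AddCommMonoid A] (F : (Fin (t + 1) → ι) → A) :
    ∑ ω, F ω = ∑ ω : Fin t → ι, ∑ j, F (Fin.snoc (α := fun _ => ι) ω j) := by
  rw [← (Fin.snocEquiv fun _ : Fin (t + 1) => ι).sum_comp, Fintype.sum_prod_type_right]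
  rfl

lemma sum_pathWeight_mul_first (p : ι → R) {M : Matrix ι ι R} (hM : ∀ i, ∑ j, M i j = 1) (t : ℕ)
    (f : ι → R) :
    ∑ ω : Fin (t + 1) → ι, pathWeight p M ω * f (ω 0) = p ⬝ᵥ f := by
  induction t with
  | zero => exact Fintype.sum_equiv (Equiv.funUnique (Fin 1) ι) _ _ fun ω => by simp [pathWeight]
  | succ t ih =>
    rw [sum_path_eq_sum_snoc, ← ih]
    simp only [pathWeight_snoc, ← Fin.castSucc_zero, Fin.snoc_castSucc, ← sum_mul, ← mul_sum, hM,
      mul_one]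

variable [DecidableEq ι]

lemma sum_pathWeight_mul_last (p : ι → R) (M : Matrix ι ι R) (t : ℕ) (f : ι → R) :
    ∑ ω : Fin (t + 1) → ι, pathWeight p M ω * f (ω (Fin.last t)) = p ⬝ᵥ (M ^ t *ᵥ f) := by
  induction t generalizing f with
  | zero =>
    rw [pow_zero, one_mulVec]
    exact Fintype.sum_equiv (Equiv.funUnique (Fin 1) ι) _ _ fun ω => by simp [pathWeight]
  | succ t ih =>
    rw [sum_path_eq_sum_snoc, pow_succ, ← mulVec_mulVec, ← ih]
    simp only [pathWeight_snoc, Fin.snoc_last, mulVec, dotProduct, mul_sum, mul_assoc]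

lemma sum_pathWeight_mul_sum_steps (p : ι → R) {M : Matrix ι ι R} (hM : ∀ i, ∑ j, M i j = 1)
    (L : ι → ι → R) (t : ℕ) :
    ∑ ω : Fin (t + 1) → ι, pathWeight p M ω * ∑ s : Fin t, L (ω s.castSucc) (ω s.succ) =
      p ⬝ᵥ ∑ s ∈ range t, M ^ s *ᵥ fun i => ∑ j, M i j * L i j := by
  induction t with
  | zero => simp
  | succ t ih =>
    rw [sum_path_eq_sum_snoc, sum_range_succ, dotProduct_add, ← ih, ← sum_pathWeight_mul_last,
      ← sum_add_distrib]
    refine sum_congr rfl fun ω _ => ?_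
    simp only [pathWeight_snoc, Fin.sum_univ_castSucc, Fin.succ_last, Fin.succ_castSucc,
      Fin.snoc_last, Fin.snoc_castSucc, mul_add, sum_add_distrib, mul_assoc, ← mul_sum, ← sum_mul,
      hM, one_mul]

end PathSums

lemma iterate_mulVec {ι R : Type*} [Fintype ι] [DecidableEq ι] [CommSemiring R] (M : Matrix ι ι R)
    (k : ℕ) (v : ι → R) : (M *ᵥ ·)^[k] v = M ^ k *ᵥ v := by
  rw [← toLin'_apply (M ^ k), toLin'_pow, Module.End.pow_apply]
  rfl

section MeanErgodic

variable {ι : Type*} [Fintype ι] [DecidableEq ι] {M : Matrix ι ι ℝ}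

lemma norm_mulVec_le_of_mem_rowStochastic (hM : M ∈ rowStochastic ℝ ι) (f : ι → ℝ) :
    ‖M *ᵥ f‖ ≤ ‖f‖ := by
  refine (pi_norm_le_iff_of_nonneg (norm_nonneg f)).2 fun i => ?_
  calc ‖∑ j, M i j * f j‖ ≤ ∑ j, M i j * ‖f‖ := norm_sum_le_of_le _ fun j _ => by
        rw [norm_mul, Real.norm_of_nonneg (nonneg_of_mem_rowStochastic hM)]
        exact mul_le_mul_of_nonneg_left (norm_le_pi_norm f j) (nonneg_of_mem_rowStochastic hM)
    _ = ‖f‖ := by rw [← sum_mul, sum_row_of_mem_rowStochastic hM, one_mul]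

-- Maximum principle: where `v` is maximal, `v i` is a weighted mean of values that do not exceed
-- it, so every state reachable from `i` attains the maximum as well.
lemma apply_eq_apply_of_mulVec_eq_self (hM : M ∈ rowStochastic ℝ ι) (hirr : M.IsIrreducible)
    {v : ι → ℝ} (hv : M *ᵥ v = v) (a b : ι) : v a = v b := by
  have : Nonempty ι := ⟨a⟩
  obtain ⟨i, hi⟩ := Finite.exists_max v
  suffices hmax : ∀ j, v j = v i by rw [hmax a, hmax b]
  intro j
  obtain ⟨k, -, hk⟩ := (isIrreducible_iff_exists_pow_pos hirr.nonneg).1 hirr i j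
  have hMk : M ^ k ∈ rowStochastic ℝ ι := pow_mem hM k
  have hfix : M ^ k *ᵥ v = v := by
    rw [← iterate_mulVec]
    exact Function.iterate_fixed hv k
  have hmean : ∑ l, (M ^ k) i l * (v i - v l) = 0 := by
    simp only [mul_sub, sum_sub_distrib, ← sum_mul, sum_row_of_mem_rowStochastic hMk, one_mul]
    exact sub_eq_zero.2 (congrFun hfix i).symm
  have hterm := (sum_eq_zero_iff_of_nonneg fun l _ =>
    mul_nonneg (nonneg_of_mem_rowStochastic hMk) (sub_nonneg.2 (hi l))).1 hmean j (mem_univ j)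
  exact (sub_eq_zero.1 ((mul_eq_zero.1 hterm).resolve_left hk.ne')).symm

lemma dotProduct_eq_apply_of_mulVec_eq_self (hM : M ∈ rowStochastic ℝ ι) (hirr : M.IsIrreducible)
    {π : ι → ℝ} (hπ1 : ∑ i, π i = 1) {v : ι → ℝ} (hv : M *ᵥ v = v) (i : ι) : π ⬝ᵥ v = v i :=
  calc π ⬝ᵥ v = ∑ j, π j * v i := sum_congr rfl fun j _ => by
        rw [apply_eq_apply_of_mulVec_eq_self hM hirr hv i j]
    _ = v i := by rw [← sum_mul, hπ1, one_mul]

lemma exists_mulVec_sub_eq (hM : M ∈ rowStochastic ℝ ι) (hirr : M.IsIrreducible)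
    {π : ι → ℝ} (hπ1 : ∑ i, π i = 1) (hπ : π ᵥ* M = π) {f : ι → ℝ} (hf : π ⬝ᵥ f = 0) :
    ∃ g, M *ᵥ g - g = f := by
  let K := LinearMap.ker (dotProductBilin ℝ ℝ π)
  let T : (ι → ℝ) →ₗ[ℝ] ι → ℝ := M.mulVecLin - 1
  have hTK : ∀ g ∈ K, T g ∈ K := fun g _ => by
    change π ⬝ᵥ (M *ᵥ g - g) = 0
    rw [dotProduct_sub, dotProduct_mulVec, hπ, sub_self]
  have hinj : Function.Injective (T.restrict hTK) := by
    refine (injective_iff_map_eq_zero _).2 fun ⟨g, (hg : π ⬝ᵥ g = 0)⟩ hTg => ?_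
    have hfix : M *ᵥ g = g := sub_eq_zero.1 (congrArg Subtype.val hTg)
    exact Subtype.ext <| funext fun i =>
      (dotProduct_eq_apply_of_mulVec_eq_self hM hirr hπ1 hfix i).symm.trans hg
  obtain ⟨g, hg⟩ := LinearMap.injective_iff_surjective.1 hinj ⟨f, hf⟩
  exact ⟨g, congrArg Subtype.val hg⟩

theorem tendsto_cesaro_pow_mulVec (hM : M ∈ rowStochastic ℝ ι) (hirr : M.IsIrreducible)
    {π : ι → ℝ} (hπ1 : ∑ i, π i = 1) (hπ : π ᵥ* M = π) (f : ι → ℝ) :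
    Tendsto (fun t : ℕ => (t : ℝ)⁻¹ • ∑ s ∈ range t, M ^ s *ᵥ f) atTop
      (𝓝 (Function.const ι (π ⬝ᵥ f))) := by
  let T := M.mulVecLin
  have hconst (c : ℝ) : Function.const ι c ∈ LinearMap.eqLocus T 1 := by
    change M *ᵥ Function.const ι c = Function.const ι c
    ext i
    simp [mulVec, dotProduct, ← sum_mul, sum_row_of_mem_rowStochastic hM]
  let P : (ι → ℝ) →ₗ[ℝ] LinearMap.eqLocus T 1 :=
    (LinearMap.pi fun _ => dotProductBilin ℝ ℝ π).codRestrict _ fun v => hconst (π ⬝ᵥ v)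
  have hlip : LipschitzWith 1 T :=
    AddMonoidHomClass.lipschitz_of_bound_nnnorm T 1 fun v => by
      rw [one_mul]
      exact norm_mulVec_le_of_mem_rowStochastic hM v
  have hproj (v : LinearMap.eqLocus T 1) : P v = v :=
    Subtype.ext <| funext <| dotProduct_eq_apply_of_mulVec_eq_self hM hirr hπ1 v.2
  have hker : (LinearMap.ker P : Set (ι → ℝ)) ⊆ LinearMap.range (T - 1) := fun v hv => by
    obtain ⟨i, -, -⟩ := exists_ne_zero_of_sum_ne_zero (hπ1.trans_ne one_ne_zero)
    exact exists_mulVec_sub_eq hM hirr hπ1 hπ (congrFun (congrArg Subtype.val hv) i)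
  have h := T.tendsto_birkhoffAverage_of_ker_subset_closure hlip P.toContinuousLinearMap hproj
    (hker.trans subset_closure) f
  refine h.congr fun t => ?_
  simp only [birkhoffAverage, birkhoffSum, id_eq, ← iterate_mulVec]
  rfl

end MeanErgodic

section EntropyProduction

lemma ite_pos_mul_eq_mul {x : ℝ} (hx : 0 ≤ x) (y : ℝ) : (if 0 < x then x * y else 0) = x * y := by
  rcases hx.eq_or_lt with rfl | hx <;> simp [*]

variable {ι : Type*} {p π : ι → ℝ} {M : Matrix ι ι ℝ} {t : ℕ}

lemma pathWeight_mul_log_div_rev (hp : ∀ i, p i ≠ 0) (hM : ∀ i j, M i j ≠ 0 → M j i ≠ 0)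
    (ω : Fin (t + 1) → ι) :
    pathWeight p M ω * Real.log (pathWeight p M ω / pathWeight p M (ω ∘ Fin.rev)) =
      pathWeight p M ω * (Real.log (p (ω 0)) - Real.log (p (ω (Fin.last t))) +
        ∑ s : Fin t, Real.log (M (ω s.castSucc) (ω s.succ) / M (ω s.succ) (ω s.castSucc))) := by
  rcases eq_or_ne (pathWeight p M ω) 0 with h0 | h0
  · simp only [h0, zero_mul]
  have hfwd (s : Fin t) : M (ω s.castSucc) (ω s.succ) ≠ 0 :=
    prod_ne_zero_iff.1 (right_ne_zero_of_mul h0) s (mem_univ s)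
  have hbwd (s : Fin t) : M (ω s.succ) (ω s.castSucc) ≠ 0 := hM _ _ (hfwd s)
  rw [pathWeight_comp_rev, pathWeight, mul_div_mul_comm, ← prod_div_distrib,
    Real.log_mul (div_ne_zero (hp _) (hp _))
      (prod_ne_zero_iff.2 fun s _ => div_ne_zero (hfwd s) (hbwd s)),
    Real.log_div (hp _) (hp _), Real.log_prod fun s _ => div_ne_zero (hfwd s) (hbwd s)]

variable [Fintype ι]

/-- The relative entropy `H(t)` of the law of the first `t` steps of the Markov chain `(p, M)` with
respect to its time reversal, under which a path `ω` has the weight of `ω` traversed backwards.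
Paths of weight zero contribute zero, so the sum ranges over all paths; a path of positive weight
whose reversal has weight zero also contributes zero instead of `∞`, as `Real.log 0 = 0`. -/
noncomputable def pathRelEntropy (p : ι → ℝ) (M : Matrix ι ι ℝ) (t : ℕ) : ℝ :=
  ∑ ω : Fin (t + 1) → ι,
    pathWeight p M ω * Real.log (pathWeight p M ω / pathWeight p M (ω ∘ Fin.rev))

/-- The expected log-ratio of forward to backward transition probability in one step of the chain
from the state `i`. A transition with `M j i = 0 < M i j` contributes zero instead of `∞`. -/
noncomputable def localEntropyProduction (M : Matrix ι ι ℝ) (i : ι) : ℝ :=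
  ∑ j, M i j * Real.log (M i j / M j i)

/-- The entropy production rate `e_p` of the chain with transition matrix `M` and
stationary distribution `π`. -/
noncomputable def entropyProductionRate (π : ι → ℝ) (M : Matrix ι ι ℝ) : ℝ :=
  π ⬝ᵥ localEntropyProduction M

lemma pathRelEntropy_eq_sum_ite (hM : ∀ i j, 0 ≤ M i j) (hp : ∀ i, 0 ≤ p i) :
    pathRelEntropy p M t = ∑ ω : Fin (t + 1) → ι, if 0 < pathWeight p M ω then
      pathWeight p M ω * Real.log (pathWeight p M ω / pathWeight p M (ω ∘ Fin.rev)) else 0 :=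
  sum_congr rfl fun _ _ => .symm <|
    ite_pos_mul_eq_mul (mul_nonneg (hp _) (prod_nonneg fun _ _ => hM _ _)) _

lemma entropyProductionRate_eq_sum_ite (hM : ∀ i j, 0 ≤ M i j) :
    entropyProductionRate π M =
      ∑ i, ∑ j, if 0 < M i j then π i * M i j * Real.log (M i j / M j i) else 0 := by
  simp only [entropyProductionRate, localEntropyProduction, dotProduct, mul_sum, mul_assoc,
    ← mul_ite_zero, ite_pos_mul_eq_mul (hM _ _)]

variable [DecidableEq ι]

lemma pathRelEntropy_eq_dotProduct (hM1 : ∀ i, ∑ j, M i j = 1) (hp : ∀ i, p i ≠ 0)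
    (hM : ∀ i j, M i j ≠ 0 → M j i ≠ 0) (t : ℕ) :
    pathRelEntropy p M t = p ⬝ᵥ (∑ s ∈ range t, M ^ s *ᵥ localEntropyProduction M +
      (Real.log ∘ p - M ^ t *ᵥ (Real.log ∘ p))) := by
  simp only [pathRelEntropy, pathWeight_mul_log_div_rev hp hM, mul_add, mul_sub, sum_add_distrib,
    sum_sub_distrib]
  rw [sum_pathWeight_mul_first p hM1 t fun i => Real.log (p i),
    sum_pathWeight_mul_last p M t fun i => Real.log (p i),
    sum_pathWeight_mul_sum_steps p hM1 fun i j => Real.log (M i j / M j i), dotProduct_add,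
    dotProduct_sub, add_comm]
  rfl

theorem entropy_production_rate_limit_general (hM : M ∈ rowStochastic ℝ ι)
    (hirr : M.IsIrreducible) (hsym : ∀ i j, 0 < M i j → 0 < M j i)
    (hp : ∀ i, 0 < p i) (hp1 : ∑ i, p i = 1) (hπ1 : ∑ i, π i = 1) (hπ : π ᵥ* M = π) :
    Tendsto (fun t : ℕ => pathRelEntropy p M t / t) atTop (𝓝 (entropyProductionRate π M)) := by
  have hsym' (i j : ι) (h : M i j ≠ 0) : M j i ≠ 0 :=
    (hsym i j ((hirr.nonneg i j).lt_of_ne' h)).ne'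
  have hinv : Tendsto (fun t : ℕ => (t : ℝ)⁻¹) atTop (𝓝 0) := tendsto_inv_atTop_nhds_zero_nat
  have hboundary : Tendsto (fun t : ℕ => (t : ℝ)⁻¹ • (Real.log ∘ p - M ^ t *ᵥ (Real.log ∘ p)))
      atTop (𝓝 0) := by
    refine hinv.zero_smul_isBoundedUnder_le (isBoundedUnder_of ⟨‖Real.log ∘ p‖ + ‖Real.log ∘ p‖,
      fun t => (norm_sub_le _ _).trans ?_⟩)
    gcongr
    exact norm_mulVec_le_of_mem_rowStochastic (pow_mem hM t) _
  have hmean := (tendsto_cesaro_pow_mulVec hM hirr hπ1 hπ (localEntropyProduction M)).add hboundary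
  have hlim := ((continuous_const (y := p)).dotProduct continuous_id).tendsto _ |>.comp hmean
  convert hlim using 2 with t
  · simp only [Function.comp_apply, id_eq, ← smul_add, dotProduct_smul, smul_eq_mul]
    rw [pathRelEntropy_eq_dotProduct (sum_row_of_mem_rowStochastic hM) (fun i => (hp i).ne') hsym',
      div_eq_inv_mul]
  · simp [entropyProductionRate, dotProduct, ← sum_mul, hp1]

end EntropyProduction

/-- The relative entropy of the path measure of an irreducible aperiodic Markov chain with
respect to its time reversal, divided by t, converges to the stationary entropy
production rate e_p = Σ_{(i,j): M_{ij}>0} π_i M_{ij} log(M_{ij}/M_{ji}). -/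
theorem entropy_production_rate_limit (n : ℕ) (M : Matrix (Fin n) (Fin n) ℝ)
    (hM0 : ∀ i j, 0 ≤ M i j) (hM1 : ∀ i, ∑ j, M i j = 1)
    (hsym : ∀ i j, 0 < M i j ↔ 0 < M j i)
    (hirr : ∀ i j, ∃ k, 1 ≤ k ∧ 0 < (M ^ k) i j)
    (haper : ∀ i, ∀ d : ℕ, (∀ k, 1 ≤ k → 0 < (M ^ k) i i → d ∣ k) → d = 1)
    (π : Fin n → ℝ) (hπ0 : ∀ i, 0 ≤ π i) (hπ1 : ∑ i, π i = 1)
    (hπstat : ∀ j, ∑ i, π i * M i j = π j)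
    (p0 : Fin n → ℝ) (hp0pos : ∀ i, 0 < p0 i) (hp01 : ∑ i, p0 i = 1)
    (w wrev : (t : ℕ) → (Fin (t + 1) → Fin n) → ℝ)
    (hw : ∀ t ω, w t ω = p0 (ω 0) * ∏ s : Fin t, M (ω s.castSucc) (ω s.succ))
    (hwrev : ∀ t ω, wrev t ω =
      p0 (ω (Fin.last t)) * ∏ s : Fin t, M (ω s.succ) (ω s.castSucc))
    (H : ℕ → ℝ)
    (hH : ∀ t, H t = ∑ ω : Fin (t + 1) → Fin n,
      if 0 < w t ω then w t ω * Real.log (w t ω / wrev t ω) else 0) :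
    Filter.Tendsto (fun t : ℕ => H t / (t : ℝ)) Filter.atTop
      (nhds (∑ i, ∑ j,
        if 0 < M i j then π i * M i j * Real.log (M i j / M j i) else 0)) := by
  have hM : M ∈ rowStochastic ℝ (Fin n) := mem_rowStochastic_iff_sum.2 ⟨hM0, hM1⟩
  obtain rfl : w = fun t ω => pathWeight p0 M ω := funext₂ hw
  obtain rfl : wrev = fun t ω => pathWeight p0 M (ω ∘ Fin.rev) :=
    funext₂ fun t ω => (hwrev t ω).trans (pathWeight_comp_rev p0 M ω).symm
  simpa only [hH, pathRelEntropy_eq_sum_ite hM0 fun i => (hp0pos i).le,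
      entropyProductionRate_eq_sum_ite hM0]
    using entropy_production_rate_limit_general hM ((isIrreducible_iff_exists_pow_pos hM0).2 hirr)
      (fun i j => (hsym i j).1) hp0pos hp01 hπ1 (funext hπstat)
end

section
/- Let M be an n×n row-stochastic matrix with stationary probability distribution π with π_i > 0 for all i, and let p be a probability distribution on {1,…,n} with p_i > 0 for all i. Define the stationary time-reversed transition matrix by M^-_{ji} = π_i M_{ij} / π_j. Then Σ_{(i,j): M_{ij}>0} p_i M_{ij} log( p_i M_{ij} / ( (pM)_j M^-_{ji} ) ) = H(p, π) − H(pM, π); in particular this quantity equals the decrease of the relative entropy with respect to π in one step. -/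
open Finset

/-!
The left-hand side compares two laws on pairs `(i, j)`: the forward one `p i * M i j`, and the
backward one, which starts from `p ᵥ* M` and steps by the time reversal of `M`. Since `M i j`
cancels from their ratio, the log-ratio is a function of `i` minus a function of `j`, namely
`log (p i / π i) - log ((p ᵥ* M) j / π j)`. Averaging each term only involves one marginal of the
forward law, `p` or `p ᵥ* M`, and gives the relative entropy of that marginal.
-/

section

open scoped Matrix

variable {ι κ : Type*}

/-- The relative entropy `H(p, q)` of weight vectors on a finite type, for `q` positive. The
convention `0 * log 0 = 0` is automatic, whatever the value of `Real.log 0`. -/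
noncomputable def relEntropy [Fintype ι] (p q : ι → ℝ) : ℝ :=
  ∑ i, p i * Real.log (p i / q i)

/-- The time reversal of a transition matrix `M` from `ι` to `κ`, relative to weights `π` on `ι`
and `σ` on `κ`. It is the Bayesian inverse of `M` when `σ = π ᵥ* M`, and the stationary time
reversal when moreover `σ = π`. -/
def timeReversal {K : Type*} [Field K] (M : Matrix ι κ K) (π : ι → K) (σ : κ → K) :
    Matrix κ ι K :=
  Matrix.of fun j i => π i * M i j / σ j

theorem mul_div_mul_timeReversal {K : Type*} [Field K] {M : Matrix ι κ K} {i : ι} {j : κ}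
    (hM : M i j ≠ 0) (π : ι → K) (σ : κ → K) (a b : K) :
    a * M i j / (b * timeReversal M π σ j i) = (a / π i) / (b / σ j) := by
  simp only [timeReversal, Matrix.of_apply]
  field_simp

theorem vecMul_apply_pos [Fintype ι] {R : Type*} [Semiring R] [PartialOrder R]
    [IsStrictOrderedRing R] {M : Matrix ι κ R} {p : ι → R} {i : ι} {j : κ}
    (hp : ∀ k, 0 ≤ p k) (hM : ∀ k, 0 ≤ M k j) (hpi : 0 < p i) (hMij : 0 < M i j) :
    0 < (p ᵥ* M) j :=
  sum_pos' (fun k _ => mul_nonneg (hp k) (hM k)) ⟨i, mem_univ i, mul_pos hpi hMij⟩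

theorem sum_sum_mul_sub_eq_dotProduct_sub [Fintype ι] [Fintype κ] {R : Type*} [CommRing R]
    {M : Matrix ι κ R} (hM : ∀ i, ∑ j, M i j = 1) (p f : ι → R) (g : κ → R) :
    ∑ i, ∑ j, p i * M i j * (f i - g j) = p ⬝ᵥ f - (p ᵥ* M) ⬝ᵥ g := by
  have source_marginal (i : ι) : ∑ j, p i * M i j * f i = p i * f i := by
    rw [← sum_mul, ← mul_sum, hM, mul_one]
  have target_marginal : ∑ i, ∑ j, p i * M i j * g j = (p ᵥ* M) ⬝ᵥ g := by
    simp only [dotProduct, Matrix.vecMul, sum_mul]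
    exact sum_comm
  simp only [mul_sub, sum_sub_distrib, source_marginal, target_marginal, dotProduct]

variable [Fintype ι] {M : Matrix ι κ ℝ} {π p : ι → ℝ} {σ : κ → ℝ}

theorem log_forward_div_backward {i : ι} {j : κ} (hM : ∀ k, 0 ≤ M k j) (hπ : 0 < π i)
    (hσ : 0 < σ j) (hp : ∀ k, 0 ≤ p k) (hpi : 0 < p i) (hMij : 0 < M i j) :
    Real.log (p i * M i j / ((p ᵥ* M) j * timeReversal M π σ j i)) =
      Real.log (p i / π i) - Real.log ((p ᵥ* M) j / σ j) := by
  have hpM : 0 < (p ᵥ* M) j := vecMul_apply_pos hp hM hpi hMij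
  rw [mul_div_mul_timeReversal hMij.ne',
    Real.log_div (div_pos hpi hπ).ne' (div_pos hpM hσ).ne']

theorem one_step_relative_entropy_decrease_general [Fintype κ]
    (hM0 : ∀ i j, 0 ≤ M i j) (hM1 : ∀ i, ∑ j, M i j = 1)
    (hπ : ∀ i, 0 < π i) (hσ : ∀ j, 0 < σ j) (hp : ∀ i, 0 ≤ p i) :
    (∑ i, ∑ j, if 0 < M i j
        then p i * M i j * Real.log (p i * M i j / ((p ᵥ* M) j * timeReversal M π σ j i))
        else 0)
      = relEntropy p π - relEntropy (p ᵥ* M) σ := by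
  have summand_eq (i : ι) (j : κ) :
      (if 0 < M i j
        then p i * M i j * Real.log (p i * M i j / ((p ᵥ* M) j * timeReversal M π σ j i))
        else 0)
        = p i * M i j * (Real.log (p i / π i) - Real.log ((p ᵥ* M) j / σ j)) := by
    split_ifs with hMij
    · rcases (hp i).eq_or_lt with hpi | hpi
      · simp only [← hpi, zero_mul]
      · rw [log_forward_div_backward (hM0 · j) (hπ i) (hσ j) hp hpi hMij]
    · rw [le_antisymm (not_lt.mp hMij) (hM0 i j), mul_zero, zero_mul]
  simp only [summand_eq]
  exact sum_sum_mul_sub_eq_dotProduct_sub hM1 p _ _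

end

/-- The non-negative quantity Σ_{(i,j):M_{ij}>0} p_i M_{ij} log( p_i M_{ij} / ((pM)_j M⁻_{ji}) ),
where M⁻_{ji} = π_i M_{ij}/π_j 's the stationary time reversal, equals the one-step decrease
H(p,π) − H(pM,π) of the relative entropy with respect to the stationary distribution. -/
theorem one_step_relative_entropy_decrease (n : ℕ)
    (M : Matrix (Fin n) (Fin n) ℝ)
    (hM0 : ∀ i j, 0 ≤ M i j) (hM1 : ∀ i, ∑ j, M i j = 1)
    (π : Fin n → ℝ) (hπpos : ∀ i, 0 < π i) (hπ1 : ∑ i, π i = 1)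
    (hπstat : ∀ j, ∑ i, π i * M i j = π j)
    (p : Fin n → ℝ) (hppos : ∀ i, 0 < p i) (hp1 : ∑ i, p i = 1)
    (Mrev : Matrix (Fin n) (Fin n) ℝ)
    (hMrev : ∀ i j, Mrev j i = π i * M i j / π j) :
    (∑ i, ∑ j, if 0 < M i j
        then p i * M i j * Real.log (p i * M i j / ((∑ k, p k * M k j) * Mrev j i))
        else 0)
      = (∑ i, p i * Real.log (p i / π i))
        - ∑ j, (∑ k, p k * M k j) * Real.log ((∑ k, p k * M k j) / π j) := by
  obtain rfl : Mrev = timeReversal M π π := Matrix.ext fun j i => hMrev i j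
  exact one_step_relative_entropy_decrease_general hM0 hM1 hπpos hπpos fun i => (hppos i).le
end

section
/- (Markov chain tree theorem.) Let M be an irreducible n×n row-stochastic matrix. For a state i, encode a spanning directed rooted tree with root i as a map τ : {1,…,n} → {1,…,n} with τ(i) = i such that for every state j there exists k ≥ 0 with τ^k(j) = i; its weight is e(τ) = Π_{j ≠ i} M_{j, τ(j)}, and e(𝒯_i) denotes the sum of e(τ) over all trees τ rooted at i. Then Σ = Σ_{k=1}^n e(𝒯_k) > 0, and the vector π with π_i = e(𝒯_i)/Σ is the (unique) stationary probability distribution of M, i.e., π_i ≥ 0, Σ_i π_i = 1 and Σ_i π_i M_{ij} = π_j for all j. -/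
open Finset
open scoped Classical

/-!
Adding an edge `r → a` to a tree rooted at `r` produces a map `σ` all of whose orbits visit `r`,
and `σ` together with `r` determines the tree. A map `σ` whose orbits all visit `j` has a single
cycle, through `j`, so `j` has exactly one predecessor on it. Cutting the edge out of that
predecessor `i` writes the total weight of such `σ` as `∑ i, e(𝒯_i) * M i j`, while cutting the
edge out of `j` writes it as `e(𝒯_j) * ∑ a, M j a`. Uniqueness is a Perron-Frobenius argument:
subtracting from a stationary vector the largest multiple of `e(𝒯)` lying below it leaves a
nonnegative stationary vector with a zero entry, and irreducibility spreads that zero everywhere.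
-/

section OrbitsVisit

variable {ι : Type*} {σ τ : ι → ι} {r : ι}

/-- Every orbit of `σ` passes through `r`. For `σ` on a finite set this says that the functional
graph of `σ` is connected with `r` on its unique cycle; it is a tree rooted at `r` precisely when
moreover `σ r = r`. -/
def OrbitsVisit (σ : ι → ι) (r : ι) : Prop :=
  ∀ j, ∃ k, σ^[k] j = r

/-- `τ` encodes a spanning tree with root `r`, each other vertex `j` having the single outgoing
edge `j → τ j`; the root carries a loop in place of an outgoing edge. -/
def IsRootedTree (τ : ι → ι) (r : ι) : Prop :=
  τ r = r ∧ OrbitsVisit τ r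

theorem orbitsVisit_of_forall_lt (d : ι → ℕ) (hd : ∀ j, j ≠ r → d (τ j) < d j) :
    OrbitsVisit τ r := by
  intro j
  induction hj : d j using Nat.strong_induction_on generalizing j with
  | h N ih =>
    by_cases hjr : j = r
    · exact ⟨0, hjr⟩
    · obtain ⟨k, hk⟩ := ih _ (hj ▸ hd j hjr) (τ j) rfl
      exact ⟨k + 1, hk⟩

theorem exists_isRootedTree_of_descent {R : ι → ι → Prop} (d : ι → ℕ)
    (hd : ∀ j, j ≠ r → ∃ a, R j a ∧ d a < d j) :
    ∃ τ, IsRootedTree τ r ∧ ∀ j, j ≠ r → R j (τ j) := by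
  choose! f hf using hd
  have hupdate : ∀ j, j ≠ r → Function.update f r r j = f j := fun j hj ↦
    Function.update_of_ne hj r f
  refine ⟨Function.update f r r,
    ⟨Function.update_self r r f, orbitsVisit_of_forall_lt d fun j hj ↦ ?_⟩, fun j hj ↦ ?_⟩
  · rw [hupdate j hj]
    exact (hf j hj).2
  · rw [hupdate j hj]
    exact (hf j hj).1

theorem OrbitsVisit.congr (hσ : OrbitsVisit σ r) (hστ : Set.EqOn σ τ {r}ᶜ) :
    OrbitsVisit τ r := by
  intro j
  obtain ⟨k, hk⟩ := hσ j
  induction k generalizing j with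
  | zero => exact ⟨0, hk⟩
  | succ k ih =>
    by_cases hj : j = r
    · exact ⟨0, hj⟩
    · obtain ⟨l, hl⟩ := ih (σ j) hk
      exact ⟨l + 1, by rwa [Function.iterate_succ_apply, ← hστ hj]⟩

theorem OrbitsVisit.update [DecidableEq ι] (hσ : OrbitsVisit σ r) (a : ι) :
    OrbitsVisit (Function.update σ r a) r :=
  hσ.congr fun _ hj ↦ (Function.update_of_ne hj a σ).symm

theorem OrbitsVisit.map (hσ : OrbitsVisit σ r) : OrbitsVisit σ (σ r) := fun j ↦
  let ⟨k, hk⟩ := hσ j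
  ⟨k + 1, by rw [Function.iterate_succ_apply', hk]⟩

theorem OrbitsVisit.mem_periodicPts (hσ : OrbitsVisit σ r) : r ∈ Function.periodicPts σ :=
  let ⟨k, hk⟩ := hσ (σ r)
  ⟨k + 1, k.succ_pos, hk⟩

theorem OrbitsVisit.existsUnique_preimage (hσ : OrbitsVisit σ r) :
    ∃! i, OrbitsVisit σ i ∧ σ i = r := by
  obtain ⟨k, hk⟩ := hσ (σ r)
  have hpred : σ (σ^[k] r) = r := by
    rwa [← Function.iterate_succ_apply' σ, Function.iterate_succ_apply]
  have hvisit : OrbitsVisit σ (σ^[k] r) := fun j ↦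
    let ⟨l, hl⟩ := hσ j
    ⟨k + l, by rw [Function.iterate_add_apply, hl]⟩
  refine ⟨σ^[k] r, ⟨hvisit, hpred⟩, fun i ⟨hi, hir⟩ ↦ ?_⟩
  exact (Function.bijOn_periodicPts σ).injOn hi.mem_periodicPts hvisit.mem_periodicPts
    (hir.trans hpred.symm)

end OrbitsVisit

theorem prod_update_eq_mul_prod_erase {ι α R : Type*} [Fintype ι] [DecidableEq ι] [CommMonoid R]
    (f : ι → α → R) (τ : ι → α) (r : ι) (a : α) :
    ∏ j, f j (Function.update τ r a j) = f r a * ∏ j ∈ univ.erase r, f j (τ j) := by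
  rw [← mul_prod_erase univ _ (mem_univ r), Function.update_self]
  congr 1
  exact prod_congr rfl fun j hj ↦ by rw [Function.update_of_ne (ne_of_mem_erase hj)]

theorem sum_sum_orbitsVisit_preimage {ι R : Type*} [Fintype ι] [DecidableEq ι] [AddCommMonoid R]
    (w : (ι → ι) → R) (j : ι) :
    ∑ i, ∑ σ : ι → ι with OrbitsVisit σ i ∧ σ i = j, w σ =
      ∑ σ : ι → ι with OrbitsVisit σ j, w σ := by
  calc ∑ i, ∑ σ : ι → ι with OrbitsVisit σ i ∧ σ i = j, w σ
      = ∑ σ : ι → ι with OrbitsVisit σ j, ∑ i with OrbitsVisit σ i ∧ σ i = j, w σ := by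
        refine sum_comm' fun i σ ↦ ?_
        simp only [mem_filter_univ, mem_univ, true_and]
        exact ⟨fun h ↦ ⟨h, h.2 ▸ h.1.map⟩, And.left⟩
    _ = ∑ σ : ι → ι with OrbitsVisit σ j, w σ := by
        refine sum_congr rfl fun σ hσ ↦ ?_
        obtain ⟨i, hi, hunique⟩ := ((mem_filter_univ σ).1 hσ).existsUnique_preimage
        have hfilter : ({i | OrbitsVisit σ i ∧ σ i = j} : Finset ι) = {i} := by
          ext i'
          simpa only [mem_filter_univ, mem_singleton] using ⟨hunique i', fun h ↦ h ▸ hi⟩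
        rw [hfilter, sum_singleton]

section TreeWeight

variable {ι R : Type*} [Fintype ι] [DecidableEq ι] [CommSemiring R]

/-- The total weight `e(𝒯_r)` of the spanning trees rooted at `r`. -/
noncomputable def rootedTreeWeight (M : Matrix ι ι R) (r : ι) : R :=
  ∑ τ : ι → ι with IsRootedTree τ r, ∏ j ∈ univ.erase r, M j (τ j)

theorem rootedTreeWeight_mul (M : Matrix ι ι R) (r a : ι) :
    rootedTreeWeight M r * M r a =
      ∑ σ : ι → ι with OrbitsVisit σ r ∧ σ r = a, ∏ j, M j (σ j) := by
  rw [rootedTreeWeight, sum_mul]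
  refine sum_bij' (fun τ _ ↦ Function.update τ r a) (fun σ _ ↦ Function.update σ r r)
    (fun τ hτ ↦ ?_) (fun σ hσ ↦ ?_) (fun τ hτ ↦ ?_) (fun σ hσ ↦ ?_) (fun τ _ ↦ ?_)
  · have hτ : IsRootedTree τ r := (mem_filter_univ τ).1 hτ
    exact (mem_filter_univ _).2 ⟨hτ.2.update a, Function.update_self r a τ⟩
  · have hσ : OrbitsVisit σ r ∧ σ r = a := (mem_filter_univ σ).1 hσ
    exact (mem_filter_univ _).2 ⟨Function.update_self r r σ, hσ.1.update r⟩
  · have hτ : IsRootedTree τ r := (mem_filter_univ τ).1 hτ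
    rw [Function.update_idem, Function.update_eq_self_iff, hτ.1]
  · have hσ : OrbitsVisit σ r ∧ σ r = a := (mem_filter_univ σ).1 hσ
    rw [Function.update_idem, Function.update_eq_self_iff, hσ.2]
  · exact (mul_comm _ _).trans (prod_update_eq_mul_prod_erase M τ r a).symm

theorem sum_rootedTreeWeight_mul (M : Matrix ι ι R) (j : ι) :
    ∑ i, rootedTreeWeight M i * M i j = rootedTreeWeight M j * ∑ a, M j a := by
  simp only [rootedTreeWeight_mul, sum_sum_orbitsVisit_preimage, mul_sum]
  rw [← sum_fiberwise _ fun σ : ι → ι ↦ σ j]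
  simp only [filter_filter]

theorem vecMul_rootedTreeWeight {M : Matrix ι ι R} (hM : ∀ i, ∑ j, M i j = 1) :
    Matrix.vecMul (rootedTreeWeight M) M = rootedTreeWeight M := by
  funext j
  exact (sum_rootedTreeWeight_mul M j).trans (by rw [hM, mul_one])

end TreeWeight

section Irreducible

variable {ι R : Type*}

theorem vecMul_pow_eq_smul [Fintype ι] [DecidableEq ι] [Semiring R]
    {A : Matrix ι ι R} {v : ι → R} {t : R} (hv : Matrix.vecMul v A = t • v) (k : ℕ) :
    Matrix.vecMul v (A ^ k) = t ^ k • v := by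
  induction k with
  | zero => rw [pow_zero, pow_zero, Matrix.vecMul_one, one_smul]
  | succ k ih =>
    rw [pow_succ, ← Matrix.vecMul_vecMul, ih, Matrix.smul_vecMul, hv, smul_smul, ← pow_succ]

theorem eq_zero_of_vecMul_eq_smul [Fintype ι] [Ring R] [LinearOrder R]
    [IsStrictOrderedRing R] {A : Matrix ι ι R} (hA : A.IsIrreducible) {v : ι → R} {t : R}
    (hv0 : ∀ i, 0 ≤ v i) (hv : Matrix.vecMul v A = t • v) {j : ι} (hj : v j = 0) : v = 0 := by
  funext i
  obtain ⟨k, -, hk⟩ := (Matrix.isIrreducible_iff_exists_pow_pos hA.nonneg).1 hA i j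
  have hsum : ∑ m, v m * (A ^ k) m j = 0 :=
    (congrFun (vecMul_pow_eq_smul hv k) j).trans (by rw [Pi.smul_apply, hj, smul_zero])
  have hterm : v i * (A ^ k) i j = 0 :=
    (sum_eq_zero_iff_of_nonneg fun m _ ↦
      mul_nonneg (hv0 m) (Matrix.pow_apply_nonneg hA.nonneg k m j)).1 hsum i (mem_univ i)
  exact (mul_eq_zero.1 hterm).resolve_right hk.ne'

theorem exists_eq_smul_of_vecMul_eq_smul {K : Type*} [Fintype ι] [Field K] [LinearOrder K]
    [IsStrictOrderedRing K] {A : Matrix ι ι K} (hA : A.IsIrreducible) {u v : ι → K} {t : K}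
    (hu0 : ∀ i, 0 < u i) (hu : Matrix.vecMul u A = t • u) (hv : Matrix.vecMul v A = t • v) :
    ∃ c : K, v = c • u := by
  cases isEmpty_or_nonempty ι
  · exact ⟨0, Subsingleton.elim _ _⟩
  obtain ⟨j, hmin⟩ := Finite.exists_min fun i ↦ v i / u i
  refine ⟨v j / u j, sub_eq_zero.1 (eq_zero_of_vecMul_eq_smul hA (t := t) (j := j) ?_ ?_ ?_)⟩
  · exact fun i ↦ sub_nonneg.2 ((le_div_iff₀ (hu0 i)).1 (hmin i))
  · rw [Matrix.sub_vecMul, Matrix.smul_vecMul, hu, hv, smul_sub, smul_comm]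
  · exact sub_eq_zero.2 (div_mul_cancel₀ (v j) (hu0 j).ne').symm

theorem exists_pos_of_pow_succ_pos [Fintype ι] [DecidableEq ι] [Ring R] [LinearOrder R]
    [IsStrictOrderedRing R] {A : Matrix ι ι R} (hA : ∀ i j, 0 ≤ A i j) {k : ℕ} {i j : ι}
    (h : 0 < (A ^ (k + 1)) i j) :
    ∃ a, 0 < A i a ∧ 0 < (A ^ k) a j := by
  rw [pow_succ', Matrix.mul_apply, sum_pos_iff_of_nonneg fun a _ ↦
    mul_nonneg (hA i a) (Matrix.pow_apply_nonneg hA k a j)] at h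
  obtain ⟨a, -, ha⟩ := h
  exact ⟨a, pos_of_mul_pos_left ha (Matrix.pow_apply_nonneg hA k a j),
    pos_of_mul_pos_right ha (hA i a)⟩

theorem exists_isRootedTree_pos [Finite ι] [Ring R] [LinearOrder R] [IsStrictOrderedRing R]
    {A : Matrix ι ι R} (hA : A.IsIrreducible) (r : ι) :
    ∃ τ, IsRootedTree τ r ∧ ∀ j, j ≠ r → 0 < A j (τ j) := by
  cases nonempty_fintype ι
  have hreach : ∀ j, ∃ k, 0 < (A ^ k) j r := fun j ↦
    ((Matrix.isIrreducible_iff_exists_pow_pos hA.nonneg).1 hA j r).imp fun _ ↦ And.right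
  -- Every vertex sends an edge to one strictly closer to `r` in the graph of positive entries.
  refine exists_isRootedTree_of_descent (R := fun j a ↦ 0 < A j a) (fun j ↦ Nat.find (hreach j))
    fun j hj ↦ ?_
  have hdist : 0 < (A ^ Nat.find (hreach j)) j r := Nat.find_spec (hreach j)
  cases hk : Nat.find (hreach j) with
  | zero => simp [hk, hj] at hdist
  | succ k =>
    rw [hk] at hdist
    obtain ⟨a, hja, har⟩ := exists_pos_of_pow_succ_pos hA.nonneg hdist
    exact ⟨a, hja, Nat.lt_succ_of_le (Nat.find_min' (hreach a) har)⟩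

theorem rootedTreeWeight_pos [Fintype ι] [DecidableEq ι] [CommRing R] [LinearOrder R]
    [IsStrictOrderedRing R] {M : Matrix ι ι R} (hM : M.IsIrreducible) (r : ι) :
    0 < rootedTreeWeight M r := by
  obtain ⟨τ, hτ, hpos⟩ := exists_isRootedTree_pos hM r
  exact sum_pos' (fun τ' _ ↦ prod_nonneg fun j _ ↦ hM.nonneg j (τ' j))
    ⟨τ, (mem_filter_univ τ).2 hτ, prod_pos fun j hj ↦ hpos j (ne_of_mem_erase hj)⟩

end Irreducible

theorem eq_rootedTreeWeight_div_of_vecMul_eq {ι K : Type*} [Fintype ι] [DecidableEq ι] [Field K]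
    [LinearOrder K] [IsStrictOrderedRing K] {M : Matrix ι ι K} (hM : ∀ i, ∑ j, M i j = 1)
    (hirr : M.IsIrreducible) {ρ : ι → K} (hρ1 : ∑ i, ρ i = 1) (hρ : Matrix.vecMul ρ M = ρ) (i : ι) :
    ρ i = rootedTreeWeight M i / ∑ k, rootedTreeWeight M k := by
  obtain ⟨c, rfl⟩ := exists_eq_smul_of_vecMul_eq_smul hirr (t := 1) (rootedTreeWeight_pos hirr)
    ((vecMul_rootedTreeWeight hM).trans (one_smul K _).symm) (hρ.trans (one_smul K ρ).symm)
  simp only [Pi.smul_apply, smul_eq_mul, ← mul_sum] at hρ1 ⊢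
  rw [eq_one_div_of_mul_eq_one_left hρ1, one_div_mul_eq_div]

theorem markov_chain_tree_theorem_general {ι K : Type*} [Fintype ι] [DecidableEq ι] [Nonempty ι]
    [Field K] [LinearOrder K] [IsStrictOrderedRing K] {M : Matrix ι ι K}
    (hM : ∀ i, ∑ j, M i j = 1) (hirr : M.IsIrreducible) {Z : K}
    (hZ : Z = ∑ k, rootedTreeWeight M k) :
    0 < Z ∧
    (∀ i, 0 < rootedTreeWeight M i / Z) ∧
    (∑ i, rootedTreeWeight M i / Z) = 1 ∧
    (∀ j, ∑ i, (rootedTreeWeight M i / Z) * M i j = rootedTreeWeight M j / Z) ∧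
    (∀ ρ : ι → K, (∑ i, ρ i) = 1 → (∀ j, ∑ i, ρ i * M i j = ρ j) →
      ∀ i, ρ i = rootedTreeWeight M i / Z) := by
  have hZpos : 0 < Z := hZ ▸ sum_pos (fun i _ ↦ rootedTreeWeight_pos hirr i) univ_nonempty
  refine ⟨hZpos, fun i ↦ div_pos (rootedTreeWeight_pos hirr i) hZpos, ?_, fun j ↦ ?_,
    fun ρ hρ1 hρ ↦ ?_⟩
  · rw [← sum_div, ← hZ, div_self hZpos.ne']
  · simp only [div_mul_eq_mul_div, ← sum_div, sum_rootedTreeWeight_mul, hM, mul_one]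
  · exact hZ ▸ eq_rootedTreeWeight_div_of_vecMul_eq hM hirr hρ1 (funext hρ)

/-- Markov chain tree theorem: for an irreducible row-stochastic matrix, the vector
π_i = e(𝒯_i)/Σ of normalized tree weights is the unique stationary distribution. -/
theorem markov_chain_tree_theorem (n : ℕ) (hn : 1 ≤ n)
    (M : Matrix (Fin n) (Fin n) ℝ)
    (hM0 : ∀ i j, 0 ≤ M i j) (hM1 : ∀ i, ∑ j, M i j = 1)
    (hirr : ∀ i j, ∃ k, 1 ≤ k ∧ 0 < (M ^ k) i j)
    (eT : Fin n → ℝ)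
    (heT : ∀ i, eT i = ∑ τ : Fin n → Fin n,
      if (τ i = i ∧ ∀ j, ∃ k, τ^[k] j = i)
        then ∏ j ∈ Finset.univ.erase i, M j (τ j) else 0)
    (Z : ℝ) (hZ : Z = ∑ k, eT k) :
    0 < Z ∧
    (∀ i, 0 ≤ eT i / Z) ∧
    (∑ i, eT i / Z) = 1 ∧
    (∀ j, ∑ i, (eT i / Z) * M i j = eT j / Z) ∧
    (∀ ρ : Fin n → ℝ, (∀ i, 0 ≤ ρ i) → (∑ i, ρ i) = 1 →
      (∀ j, ∑ i, ρ i * M i j = ρ j) → ∀ i, ρ i = eT i / Z) := by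
  have : Nonempty (Fin n) := ⟨⟨0, hn⟩⟩
  obtain rfl : eT = rootedTreeWeight M := funext fun i ↦ by
    rw [heT, rootedTreeWeight, sum_filter]
    exact sum_congr rfl fun _ _ ↦ if_congr Iff.rfl rfl rfl
  obtain ⟨hZpos, hpos, hsum, hstat, hunique⟩ := markov_chain_tree_theorem_general hM1
    ((Matrix.isIrreducible_iff_exists_pow_pos hM0).2 hirr) hZ
  exact ⟨hZpos, fun i ↦ (hpos i).le, hsum, hstat, fun ρ _ ↦ hunique ρ⟩
end

section
/- Let M be an n×n row-stochastic matrix and let Q be the maximum entropy RDS measure on the set of all maps α : {1,…,n} → {1,…,n}, given by Q(α) = Π_{i=1}^n M_{i, α(i)}. For a map α let Per(α) = {x : α^k(x) = x for some k ≥ 1} be its set of periodic points; say α has a single attractor if for all x, y ∈ Per(α) there exists k ≥ 0 with α^k(x) = y, and define ‖A(α)‖ = |Per(α)| if α has a single attractor and ‖A(α)‖ = 0 otherwise. Then Σ_{k=1}^n e(𝒯_k) = Σ_α Q(α) ‖A(α)‖, i.e., the tree-weight normalization factor equals the expected size of the single attractor of a Q-random map. -/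
open Finset
open scoped Classical

/-!
Multiplying the weight of a tree rooted at `r` by the row sum at `r` amounts to choosing an
arbitrary image for `r`. Since redirecting `r` does not affect which states reach `r`, this produces
each map under which every state reaches `r` exactly once. On a finite set these `r` are the
periodic points if the map has a single attractor and do not exist otherwise, so exchanging the sums
over roots and over maps counts them.
-/

open Function

section Reachability

variable {σ : Type*} {f g : σ → σ} {r x y : σ}

/-- Every state reaches `r` under iteration of `f`. The maps that moreover fix `r` encode the
spanning trees rooted at `r`. -/
def IsGloballyReachable (f : σ → σ) (r : σ) : Prop :=
  ∀ x, ∃ k, f^[k] x = r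

/-- The map `f` has a single attractor: any two of its periodic points reach each other. -/
def HasSingleAttractor (f : σ → σ) : Prop :=
  ∀ x ∈ periodicPts f, ∀ y ∈ periodicPts f, ∃ k, f^[k] x = y

theorem exists_iterate_mem_periodicPts [Finite σ] (f : σ → σ) (x : σ) :
    ∃ k, f^[k] x ∈ periodicPts f := by
  obtain ⟨a, b, hab, heq⟩ : ∃ a b, a < b ∧ f^[a] x = f^[b] x :=
    Set.finite_univ.exists_lt_map_eq_of_forall_mem fun k => Set.mem_univ (f^[k] x)
  refine ⟨a, mk_mem_periodicPts (Nat.sub_pos_of_lt hab) ?_⟩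
  rw [IsPeriodicPt, IsFixedPt, ← iterate_add_apply, Nat.sub_add_cancel hab.le, heq]

theorem exists_iterate_iterate_eq_of_mem_periodicPts (hx : x ∈ periodicPts f) (a : ℕ) :
    ∃ k, f^[k] (f^[a] x) = x := by
  obtain ⟨p, hp, hpx⟩ := hx
  refine ⟨p * a - a, ?_⟩
  rw [← iterate_add_apply, Nat.sub_add_cancel (Nat.le_mul_of_pos_left a hp)]
  exact hpx.mul_const a

theorem IsGloballyReachable.mem_periodicPts (h : IsGloballyReachable f r) :
    r ∈ periodicPts f := by
  obtain ⟨k, hk⟩ := h (f r)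
  exact mk_mem_periodicPts k.succ_pos hk

theorem IsGloballyReachable.hasSingleAttractor (h : IsGloballyReachable f r) :
    HasSingleAttractor f := by
  intro x _ y hy
  obtain ⟨a, hxr⟩ := h x
  obtain ⟨b, hyr⟩ := h y
  obtain ⟨c, hry⟩ := exists_iterate_iterate_eq_of_mem_periodicPts hy b
  exact ⟨c + a, by rw [iterate_add_apply, hxr, ← hyr, hry]⟩

theorem HasSingleAttractor.isGloballyReachable [Finite σ] (h : HasSingleAttractor f)
    (hr : r ∈ periodicPts f) : IsGloballyReachable f r := by
  intro x
  obtain ⟨a, ha⟩ := exists_iterate_mem_periodicPts f x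
  obtain ⟨b, hb⟩ := h _ ha r hr
  exact ⟨b + a, by rw [iterate_add_apply, hb]⟩

theorem isGloballyReachable_iff [Finite σ] :
    IsGloballyReachable f r ↔ HasSingleAttractor f ∧ r ∈ periodicPts f :=
  ⟨fun h => ⟨h.hasSingleAttractor, h.mem_periodicPts⟩, fun h => h.1.isGloballyReachable h.2⟩

/-- The number of periodic points of `f` if `f` has a single attractor, and `0` otherwise. -/
noncomputable def attractorSize [Fintype σ] (f : σ → σ) : ℕ :=
  if HasSingleAttractor f then #{x | x ∈ periodicPts f} else 0

theorem attractorSize_eq_card_isGloballyReachable [Fintype σ] (f : σ → σ) :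
    attractorSize f = #{r | IsGloballyReachable f r} := by
  by_cases h : HasSingleAttractor f <;> simp [attractorSize, isGloballyReachable_iff, h]

theorem IsGloballyReachable.of_eqOn_compl (h : IsGloballyReachable f r)
    (hfg : Set.EqOn f g {r}ᶜ) : IsGloballyReachable g r := by
  intro x
  obtain ⟨k, hk⟩ := h x
  induction k generalizing x with
  | zero => exact ⟨0, hk⟩
  | succ k ih =>
    by_cases hx : x = r
    · exact ⟨0, hx⟩
    · obtain ⟨m, hm⟩ := ih (f x) hk
      exact ⟨m + 1, by rw [iterate_succ_apply, ← hfg hx, hm]⟩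

theorem isGloballyReachable_update_iff [DecidableEq σ] (s : σ) :
    IsGloballyReachable (update f r s) r ↔ IsGloballyReachable f r := by
  have heq : Set.EqOn (update f r s) f {r}ᶜ := fun _ hx => update_of_ne hx s f
  exact ⟨fun h => h.of_eqOn_compl heq, fun h => h.of_eqOn_compl heq.symm⟩

end Reachability

section Weights

variable {σ R : Type*} [Fintype σ] [DecidableEq σ] [CommSemiring R]

/-- The weight `∏ i, M i (f i)` of a map `f`; for a stochastic `M` this is the maximum entropy
measure of `f`. -/
def mapWeight (M : Matrix σ σ R) (f : σ → σ) : R :=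
  ∏ i, M i (f i)

/-- The total weight of the spanning trees rooted at `r`. A tree is encoded by its parent map,
with the root as its own parent, and the loop at the root carries no weight. -/
noncomputable def treeWeight (M : Matrix σ σ R) (r : σ) : R :=
  ∑ τ : σ → σ with τ r = r ∧ IsGloballyReachable τ r, ∏ j ∈ univ.erase r, M j (τ j)

theorem mapWeight_update (M : Matrix σ σ R) (f : σ → σ) (r s : σ) :
    mapWeight M (update f r s) = M r s * ∏ j ∈ univ.erase r, M j (f j) := by
  rw [mapWeight, ← mul_prod_erase univ _ (mem_univ r), update_self]
  congr 1
  exact prod_congr rfl fun j hj => by rw [update_of_ne (ne_of_mem_erase hj)]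

theorem sum_row_mul_treeWeight (M : Matrix σ σ R) (r : σ) :
    (∑ s, M r s) * treeWeight M r = ∑ f with IsGloballyReachable f r, mapWeight M f := by
  rw [treeWeight, sum_mul_sum, ← sum_product']
  refine sum_nbij' (fun p => update p.2 r p.1) (fun f => (f r, update f r r)) ?_ ?_ ?_ ?_ ?_
  · simp +contextual [isGloballyReachable_update_iff]
  · simp [isGloballyReachable_update_iff]
  · rintro ⟨s, τ⟩ h
    have hroot : τ r = r := (mem_filter.mp (mem_product.mp h).2).2.1
    have hτ : update τ r r = τ := update_eq_self_iff.mpr hroot.symm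
    simp [hτ]
  · simp
  · exact fun p _ => (mapWeight_update M p.2 r p.1).symm

theorem normalization_is_expected_attractor_size_general (M : Matrix σ σ R) :
    ∑ r, (∑ s, M r s) * treeWeight M r = ∑ f, mapWeight M f * attractorSize f := by
  calc ∑ r, (∑ s, M r s) * treeWeight M r
      = ∑ r, ∑ f with IsGloballyReachable f r, mapWeight M f :=
        sum_congr rfl fun r _ => sum_row_mul_treeWeight M r
    _ = ∑ f, ∑ r with IsGloballyReachable f r, mapWeight M f := by
        simp only [sum_filter]
        exact sum_comm
    _ = ∑ f, mapWeight M f * attractorSize f := by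
        simp only [sum_const, attractorSize_eq_card_isGloballyReachable, nsmul_eq_mul, mul_comm]

end Weights

/-- The tree-weight normalization factor Σ_k e(𝒯_k) equals the expected size of the
single attractor of a random map drawn from the maximum entropy RDS measure
Q(α) = Π_i M_{i,α(i)}. -/
theorem normalization_is_expected_attractor_size (n : ℕ)
    (M : Matrix (Fin n) (Fin n) ℝ)
    (hM0 : ∀ i j, 0 ≤ M i j) (hM1 : ∀ i, ∑ j, M i j = 1)
    (Q : (Fin n → Fin n) → ℝ) (hQ : ∀ α, Q α = ∏ i, M i (α i))
    (Per : (Fin n → Fin n) → Finset (Fin n))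
    (hPer : ∀ α, Per α = Finset.univ.filter fun x => ∃ k, 1 ≤ k ∧ α^[k] x = x)
    (single : (Fin n → Fin n) → Prop)
    (hsingle : ∀ α, single α ↔ ∀ x ∈ Per α, ∀ y ∈ Per α, ∃ k, α^[k] x = y)
    (normA : (Fin n → Fin n) → ℝ)
    (hnormA : ∀ α, normA α = if single α then ((Per α).card : ℝ) else 0)
    (eT : Fin n → ℝ)
    (heT : ∀ i, eT i = ∑ τ : Fin n → Fin n,
      if (τ i = i ∧ ∀ j, ∃ k, τ^[k] j = i)
        then ∏ j ∈ Finset.univ.erase i, M j (τ j) else 0) :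
    ∑ k, eT k = ∑ α : Fin n → Fin n, Q α * normA α := by
  have htree : ∀ r, eT r = treeWeight M r := fun r => by
    rw [heT, treeWeight, sum_filter]
    congr!
  have hsize : ∀ α, normA α = attractorSize α := by
    simp [hnormA, attractorSize, hsingle, HasSingleAttractor, hPer, periodicPts, IsPeriodicPt,
      IsFixedPt, Nat.succ_le_iff]
  simpa [hM1, htree, hsize, hQ, mapWeight] using normalization_is_expected_attractor_size_general M
end
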